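/- Let λ and φ denote the Carmichael function and the Euler totient function, respectively. If m and n are relatively prime positive integers such that cosocle(m) > rad(n) > 1, then (1, n^{λ(m)·k} - 1, n^{λ(m)·k}) and (1, n^{φ(m)·k} - 1, n^{φ(m)·k}) are abc triples for each positive integer k. -/

import Mathlib

open scoped Classical

/-- The radical of a natural number: the product of its distinct prime factors. -/
def rad (n : ℕ) : ℕ := ∏ p ∈ n.primeFactors, p

/-- The cosocle of a natural number: `n / rad n`. -/
def cosocle (n : ℕ) : ℕ := n / rad n

/-- `(a, b, c)` is an abc triple: `a, b, c` are relatively prime positive integers with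
`a + b = c` and `rad (a*b*c) < c`. -/
def IsABCTriple (a b c : ℕ) : Prop :=
  0 < a ∧ 0 < b ∧ 0 < c ∧ a + b = c ∧
    Nat.Coprime a b ∧ Nat.Coprime a c ∧ Nat.Coprime b c ∧ rad (a * b * c) < c

/-- The Carmichael function: `carmichael m` is the least positive integer `l` such that
`a ^ l ≡ 1 (mod m)` for every integer `a` relatively prime to `m`. -/
noncomputable def carmichael (m : ℕ) : ℕ :=
  sInf {l : ℕ | 0 < l ∧ ∀ a : ℕ, Nat.Coprime a m → a ^ l ≡ 1 [MOD m]}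

/-! If `a + b = c` with `a`, `b` coprime, then `rad (a * b * c)` splits as
`rad a * rad c * rad b`, while `b = cosocle b * rad b`. Hence `rad a * rad c < cosocle b` already
forces `rad (a * b * c) < b < c`. For `1 + (n ^ e - 1) = n ^ e` with `e ≠ 0` the left-hand side is
`rad n`, and `cosocle (n ^ e - 1)` is at least `cosocle m` as soon as `n ^ e ≡ 1 [MOD m]`, which
holds when `e` is a multiple of `λ(m)` or `φ(m)`. -/

open UniqueFactorizationMonoid (radical_dvd_self radical_mul radical_mul_dvd radical_pow)

theorem rad_eq_radical (n : ℕ) : rad n = UniqueFactorizationMonoid.radical n :=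
  Nat.radical_eq_prod_primeFactors.symm

theorem rad_pos (n : ℕ) : 0 < rad n :=
  rad_eq_radical n ▸ Nat.radical_pos n

theorem one_lt_rad_iff {n : ℕ} : 1 < rad n ↔ 1 < n := by
  rw [rad_eq_radical, Nat.one_lt_radical_iff]

theorem rad_dvd_self (n : ℕ) : rad n ∣ n :=
  rad_eq_radical n ▸ radical_dvd_self

theorem rad_one : rad 1 = 1 := by
  simp [rad]

theorem rad_pow (n : ℕ) {e : ℕ} (he : e ≠ 0) : rad (n ^ e) = rad n := by
  simp only [rad_eq_radical, radical_pow n he]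

theorem rad_mul_dvd (a b : ℕ) : rad (a * b) ∣ rad a * rad b := by
  simpa only [rad_eq_radical] using radical_mul_dvd

theorem rad_mul_of_coprime {a b : ℕ} (hab : a.Coprime b) : rad (a * b) = rad a * rad b := by
  simpa only [rad_eq_radical] using radical_mul (Nat.coprime_iff_isRelPrime.1 hab)

theorem cosocle_mul_rad (n : ℕ) : cosocle n * rad n = n :=
  Nat.div_mul_cancel (rad_dvd_self n)

theorem cosocle_pos {n : ℕ} (hn : n ≠ 0) : 0 < cosocle n :=
  Nat.pos_of_mul_pos_right ((cosocle_mul_rad n).symm ▸ Nat.pos_of_ne_zero hn)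

theorem cosocle_dvd_cosocle {m n : ℕ} (hmn : m ∣ n) : cosocle m ∣ cosocle n := by
  obtain ⟨q, rfl⟩ := hmn
  have hrad : rad (m * q) ∣ rad m * q :=
    (rad_mul_dvd m q).trans (mul_dvd_mul_left _ (rad_dvd_self q))
  refine Nat.dvd_of_mul_dvd_mul_right (rad_pos (m * q)) ?_
  calc cosocle m * rad (m * q) ∣ cosocle m * (rad m * q) := mul_dvd_mul_left _ hrad
    _ = cosocle (m * q) * rad (m * q) := by rw [← mul_assoc, cosocle_mul_rad, cosocle_mul_rad]

theorem isABCTriple_of_rad_mul_rad_lt_cosocle {a b c : ℕ} (ha : 0 < a) (hb : 0 < b)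
    (habc : a + b = c) (hab : a.Coprime b) (hrad : rad a * rad c < cosocle b) :
    IsABCTriple a b c := by
  have hac : a.Coprime c := by simpa [← habc] using hab
  have hbc : b.Coprime c := by simpa [← habc] using hab.symm
  refine ⟨ha, hb, by omega, habc, hab, hac, hbc, ?_⟩
  calc rad (a * b * c) = rad a * rad c * rad b := by
        rw [rad_mul_of_coprime (hac.mul_left hbc), rad_mul_of_coprime hab, mul_right_comm]
    _ < cosocle b * rad b := Nat.mul_lt_mul_of_pos_right hrad (rad_pos b)
    _ = b := cosocle_mul_rad b
    _ < c := by omega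

theorem isABCTriple_one_pow_sub_one {m n e : ℕ} (hn : 1 < n) (he : e ≠ 0)
    (hmod : n ^ e ≡ 1 [MOD m]) (hrad : rad n < cosocle m) :
    IsABCTriple 1 (n ^ e - 1) (n ^ e) := by
  have hpow : 1 < n ^ e := Nat.one_lt_pow he hn
  have hsub : 0 < n ^ e - 1 := Nat.sub_pos_of_lt hpow
  have hdvd : m ∣ n ^ e - 1 := (Nat.modEq_iff_dvd' hpow.le).1 hmod.symm
  refine isABCTriple_of_rad_mul_rad_lt_cosocle one_pos hsub (Nat.add_sub_cancel' hpow.le)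
    (Nat.coprime_one_left _) ?_
  calc rad 1 * rad (n ^ e) = rad n := by rw [rad_one, one_mul, rad_pow n he]
    _ < cosocle m := hrad
    _ ≤ cosocle (n ^ e - 1) := Nat.le_of_dvd (cosocle_pos hsub.ne') (cosocle_dvd_cosocle hdvd)

theorem carmichael_mem (m : ℕ) :
    carmichael m ∈ {l : ℕ | 0 < l ∧ ∀ a : ℕ, a.Coprime m → a ^ l ≡ 1 [MOD m]} := by
  refine Nat.sInf_mem ?_
  obtain rfl | hm := m.eq_zero_or_pos
  · exact ⟨1, one_pos, fun a ha => by rw [(Nat.coprime_zero_right a).1 ha, one_pow]⟩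
  · exact ⟨m.totient, Nat.totient_pos.2 hm, fun _ => Nat.ModEq.pow_totient⟩

theorem carmichael_pos (m : ℕ) : 0 < carmichael m :=
  (carmichael_mem m).1

theorem pow_carmichael_modEq_one {a m : ℕ} (ha : a.Coprime m) : a ^ carmichael m ≡ 1 [MOD m] :=
  (carmichael_mem m).2 a ha

theorem stmt_13 (m n : ℕ) (hm : 0 < m) (hn : 0 < n) (hmn : Nat.Coprime m n)
    (h1 : 1 < rad n) (h2 : rad n < cosocle m) :
    ∀ k : ℕ, 0 < k →
      IsABCTriple 1 (n ^ (carmichael m * k) - 1) (n ^ (carmichael m * k)) ∧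
      IsABCTriple 1 (n ^ (Nat.totient m * k) - 1) (n ^ (Nat.totient m * k)) := by
  intro k hk
  have habc {l : ℕ} (hl : 0 < l) (hmod : n ^ l ≡ 1 [MOD m]) :
      IsABCTriple 1 (n ^ (l * k) - 1) (n ^ (l * k)) :=
    isABCTriple_one_pow_sub_one (one_lt_rad_iff.1 h1) (Nat.mul_pos hl hk).ne'
      (by simpa only [pow_mul, one_pow] using hmod.pow k) h2
  exact ⟨habc (carmichael_pos m) (pow_carmichael_modEq_one hmn.symm),
    habc (Nat.totient_pos.2 hm) (Nat.ModEq.pow_totient hmn.symm)⟩
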